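/- Let p ≥ 1 be real, K > 0, and let μ : [0,∞) → (0,∞) be nonincreasing with μ(s) ≤ K(1+s)^{−1/p} for all s ≥ 0. Let ω be a linear functional on L∞((0,∞)) which is positive (ω(f) ≥ 0 whenever f ≥ 0 a.e.), satisfies ess liminf_{t → +∞} f(t) ≤ ω(f) ≤ ess limsup_{t → +∞} f(t) for every real-valued f ∈ L∞((0,∞)), and satisfies ω ∘ D_c = ω, ω ∘ P^a = ω and ω ∘ M = ω for all c > 0 and a > 0. Define G(λ) = (1/λ)∫₀^∞ exp(−λ^{−2/p} μ(s)^{−2}) ds for λ > 0, and Z(t) = (1/log t)∫₀^∞ μ(s)^{p + 1/log t} ds for t > e, Z(t) = 0 for 0 < t ≤ e. Then G and Z are bounded and ω(G) = (1/2)·Γ(p/2)·ω(Z), where Γ is the Euler Gamma function. (This is the heat semigroup formula relating τ(e^{−T^{−2}λ^{−2/p}}) to residues of the zeta function ζ(s) = τ(T^s) for a positive operator T with singular value function μ.) -/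

import Mathlib

open Filter MeasureTheory

/-- A function is (everywhere) bounded. -/
def BddFun (f : ℝ → ℝ) : Prop := ∃ C : ℝ, ∀ x, |f x| ≤ C

/-- The logarithmic Cesàro operator: `(Mf)(t) = (1/log t)∫₁^t f(s) ds/s` for `t > 1`,
and `0` otherwise. -/
noncomputable def Mop (f : ℝ → ℝ) : ℝ → ℝ := fun t =>
  if 1 < t then (∫ s in (1:ℝ)..t, f s / s) / Real.log t else 0

/-- `G(λ) = (1/λ)∫₀^∞ exp(−λ^{−2/p} μ(s)^{−2}) ds` for `λ > 0` (and `0` for `λ ≤ 0`). -/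
noncomputable def heatFn (p : ℝ) (μ : ℝ → ℝ) : ℝ → ℝ := fun lam =>
  if 0 < lam then
    (∫ s in Set.Ioi (0:ℝ), Real.exp (-(lam ^ (-(2 / p)) * μ s ^ (-(2:ℝ))))) / lam
  else 0

/-- `Z(t) = (1/log t)∫₀^∞ μ(s)^{p + 1/log t} ds` for `t > e` (and `0` for `t ≤ e`). -/
noncomputable def zetaPFn (p : ℝ) (μ : ℝ → ℝ) : ℝ → ℝ := fun t =>
  if Real.exp 1 < t then
    (∫ s in Set.Ioi (0:ℝ), μ s ^ (p + 1 / Real.log t)) / Real.log t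
  else 0


/-! ### Abstract properties of the functional -/

lemma BddFun.add {f g : ℝ → ℝ} (hf : BddFun f) (hg : BddFun g) : BddFun (f + g) := by
  obtain ⟨C, hC⟩ := hf
  obtain ⟨D, hD⟩ := hg
  exact ⟨C + D, fun x => (abs_add_le _ _).trans (add_le_add (hC x) (hD x))⟩

lemma BddFun.smul {f : ℝ → ℝ} (c : ℝ) (hf : BddFun f) : BddFun (c • f) := by
  obtain ⟨C, hC⟩ := hf
  refine ⟨|c| * C, fun x => ?_⟩
  simp only [Pi.smul_apply, smul_eq_mul, abs_mul]
  exact mul_le_mul_of_nonneg_left (hC x) (abs_nonneg _)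

lemma BddFun.sub {f g : ℝ → ℝ} (hf : BddFun f) (hg : BddFun g) : BddFun (f - g) := by
  obtain ⟨C, hC⟩ := hf
  obtain ⟨D, hD⟩ := hg
  exact ⟨C + D, fun x => (abs_sub _ _).trans (add_le_add (hC x) (hD x))⟩

/-- The consequences of the hypotheses on `ω` that are used. -/
structure GoodFn (ω : (ℝ → ℝ) →ₗ[ℝ] ℝ) : Prop where
  le : ∀ f g : ℝ → ℝ, Measurable f → Measurable g → BddFun f → BddFun g →
    (∀ t, f t ≤ g t) → ω f ≤ ω g
  eq : ∀ f g : ℝ → ℝ, Measurable f → Measurable g → BddFun f → BddFun g →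
    Tendsto (fun t => f t - g t) atTop (nhds 0) → ω f = ω g
  pow : ∀ f : ℝ → ℝ, Measurable f → BddFun f →
      ∀ a : ℝ, 0 < a → ω (fun t => f (t ^ a)) = ω f

lemma neBot_aux : (atTop ⊓ ae ((volume : Measure ℝ).restrict (Set.Ioi 0))).NeBot := by
  rw [Filter.inf_neBot_iff]
  intro s hs s' hs'
  obtain ⟨a, ha⟩ := Filter.mem_atTop_sets.1 hs
  by_contra hne
  rw [Set.not_nonempty_iff_eq_empty] at hne
  have h1 : Set.Ioi (max a 0) ⊆ s'ᶜ := by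
    intro x hx hx'
    have hx2 : x ∈ s := ha x ((le_max_left a 0).trans (le_of_lt hx))
    have : x ∈ s ∩ s' := ⟨hx2, hx'⟩
    rw [hne] at this
    exact this
  have h2 : (volume.restrict (Set.Ioi (0:ℝ))) s'ᶜ = 0 := mem_ae_iff.1 hs'
  have h3 : (volume.restrict (Set.Ioi (0:ℝ))) (Set.Ioi (max a 0)) = 0 := measure_mono_null h1 h2
  rw [Measure.restrict_apply measurableSet_Ioi, Set.Ioi_inter_Ioi, Real.volume_Ioi] at h3
  exact ENNReal.top_ne_zero h3

lemma goodFn_of (ω : (ℝ → ℝ) →ₗ[ℝ] ℝ)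
    (hpos : ∀ f : ℝ → ℝ, Measurable f → BddFun f →
      (∀ᵐ x ∂((volume : Measure ℝ).restrict (Set.Ioi 0)), 0 ≤ f x) → 0 ≤ ω f)
    (hsandwich : ∀ f : ℝ → ℝ, Measurable f → BddFun f →
      liminf f (atTop ⊓ ae ((volume : Measure ℝ).restrict (Set.Ioi 0))) ≤ ω f ∧
        ω f ≤ limsup f (atTop ⊓ ae ((volume : Measure ℝ).restrict (Set.Ioi 0))))
    (hpow : ∀ f : ℝ → ℝ, Measurable f → BddFun f →
      ∀ a : ℝ, 0 < a → ω (fun t => f (t ^ a)) = ω f) : GoodFn ω where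
  le := by
    intro f g hf hg bf bg h
    have := hpos (g - f) (hg.sub hf) (bg.sub bf) (ae_of_all _ fun x => by simpa using h x)
    rw [map_sub] at this
    linarith
  eq := by
    intro f g hf hg bf bg h
    have := neBot_aux
    have h' : Tendsto (f - g) (atTop ⊓ ae ((volume : Measure ℝ).restrict (Set.Ioi 0))) (nhds 0) :=
      Tendsto.mono_left h inf_le_left
    have h2 := hsandwich (f - g) (hf.sub hg) (bf.sub bg)
    rw [h'.liminf_eq, h'.limsup_eq, map_sub] at h2
    linarith [h2.1, h2.2]
  pow := hpow

/-! ### The averages `Lam` -/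

/-- `Lam κ φ t = (1/log t) ∫ κ⁻¹ φ(κ^(-1/log t))`. -/
noncomputable def Lam (κ : ℝ → ℝ) (φ : ℝ → ℝ) : ℝ → ℝ := fun t =>
  if 1 < t then (∫ s in Set.Ioi (0:ℝ), (κ s)⁻¹ * φ (κ s ^ (-(1 / Real.log t)))) / Real.log t else 0

/-- Admissible test functions with constant `C`. -/
structure Adm (φ : ℝ → ℝ) (C : ℝ) : Prop where
  meas : Measurable φ
  bound : ∀ x, 0 < x → x ≤ 1 → |φ x| ≤ C * x

/-- The normalised weights. -/
structure Wt (κ : ℝ → ℝ) : Prop where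
  meas : Measurable κ
  one_le : ∀ s, 1 ≤ κ s
  le : ∀ s, 1 + s ≤ κ s

lemma integrable_base {r : ℝ} (hr : 0 < r) :
    IntegrableOn (fun s : ℝ => (1 + s) ^ (-1 - r)) (Set.Ioi 0) := by
  have := integrableOn_add_rpow_Ioi_of_lt (a := -1 - r) (c := 0) (m := 1) (by linarith) (by norm_num)
  simpa only [add_comm] using this

lemma integral_base {r : ℝ} (hr : 0 < r) :
    ∫ s in Set.Ioi (0:ℝ), (1 + s) ^ (-1 - r) = 1 / r := by
  have h := integral_Ioi_of_hasDerivAt_of_tendsto' (a := 0)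
    (f := fun s : ℝ => -(1 + s) ^ (-r) / r) (f' := fun s : ℝ => (1 + s) ^ (-1 - r)) (m := 0) ?_
    (integrable_base hr) ?_
  · rw [h]; simp; ring
  · intro x hx
    have hx0 : (0:ℝ) ≤ x := hx
    have h1 : HasDerivAt (fun s : ℝ => 1 + s) 1 x := (hasDerivAt_id x).const_add 1
    have h2 := ((h1.rpow_const (p := -r) (Or.inl (by positivity))).neg).div_const r
    refine h2.congr_deriv ?_
    rw [show -r - 1 = -1 - r by ring]
    field_simp
  · have h1 : Tendsto (fun s : ℝ => 1 + s) atTop atTop := tendsto_atTop_add_const_left _ _ tendsto_id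
    have h2 := (((tendsto_rpow_neg_atTop hr).comp h1).neg).div_const r
    simpa using h2

lemma Wt.pos {κ : ℝ → ℝ} (hκ : Wt κ) (s : ℝ) : 0 < κ s := lt_of_lt_of_le one_pos (hκ.one_le s)

lemma Wt.pow_le {κ : ℝ → ℝ} (hκ : Wt κ) {r : ℝ} (hr : 0 < r) {s : ℝ} (hs : 0 < s) :
    (κ s)⁻¹ * κ s ^ (-r) ≤ (1 + s) ^ (-1 - r) := by
  rw [← Real.rpow_neg_one (κ s), ← Real.rpow_add (hκ.pos s)]
  exact Real.rpow_le_rpow_of_nonpos (by linarith) (hκ.le s) (by linarith)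

lemma Wt.x_mem {κ : ℝ → ℝ} (hκ : Wt κ) {r : ℝ} (hr : 0 < r) (s : ℝ) :
    0 < κ s ^ (-r) ∧ κ s ^ (-r) ≤ 1 :=
  ⟨Real.rpow_pos_of_pos (hκ.pos s) _,
    Real.rpow_le_one_of_one_le_of_nonpos (hκ.one_le s) (by linarith)⟩

lemma Adm.nonneg {φ : ℝ → ℝ} {C : ℝ} (h : Adm φ C) : 0 ≤ C := by
  have := h.bound 1 one_pos le_rfl
  linarith [abs_nonneg (φ 1)]

lemma integrand_bound {κ : ℝ → ℝ} (hκ : Wt κ) {φ : ℝ → ℝ} {C : ℝ} (h : Adm φ C)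
    {r : ℝ} (hr : 0 < r) {s : ℝ} (hs : 0 < s) :
    ‖(κ s)⁻¹ * φ (κ s ^ (-r))‖ ≤ C * (1 + s) ^ (-1 - r) := by
  have hx := hκ.x_mem hr s
  have h1 := h.bound _ hx.1 hx.2
  have h2 := hκ.pow_le hr hs
  have h3 : 0 < (κ s)⁻¹ := inv_pos.2 (hκ.pos s)
  rw [Real.norm_eq_abs, abs_mul, abs_of_pos h3]
  calc (κ s)⁻¹ * |φ (κ s ^ (-r))| ≤ (κ s)⁻¹ * (C * κ s ^ (-r)) := by gcongr
    _ = C * ((κ s)⁻¹ * κ s ^ (-r)) := by ring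
    _ ≤ _ := mul_le_mul_of_nonneg_left h2 h.nonneg

lemma integrand_integrable {κ : ℝ → ℝ} (hκ : Wt κ) {φ : ℝ → ℝ} {C : ℝ} (h : Adm φ C)
    {r : ℝ} (hr : 0 < r) :
    IntegrableOn (fun s => (κ s)⁻¹ * φ (κ s ^ (-r))) (Set.Ioi 0) := by
  refine Integrable.mono' ((integrable_base hr).const_mul C) ?_ ?_
  · have := h.meas
    have := hκ.meas
    exact Measurable.aestronglyMeasurable (by fun_prop)
  · exact (ae_restrict_iff' measurableSet_Ioi).2 (ae_of_all _ fun s hs => integrand_bound hκ h hr hs)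

lemma Lam_bound {κ : ℝ → ℝ} (hκ : Wt κ) {φ : ℝ → ℝ} {C : ℝ} (h : Adm φ C) (t : ℝ) :
    |Lam κ φ t| ≤ C := by
  unfold Lam
  split_ifs with ht
  · have hu : 0 < Real.log t := Real.log_pos ht
    have hr : 0 < 1 / Real.log t := by positivity
    rw [abs_div, abs_of_pos hu, div_le_iff₀ hu, ← Real.norm_eq_abs]
    refine (norm_integral_le_of_norm_le ((integrable_base hr).const_mul C)
      ((ae_restrict_iff' measurableSet_Ioi).2
        (ae_of_all _ fun s hs => integrand_bound hκ h hr hs))).trans ?_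
    rw [integral_const_mul, integral_base hr]
    simp
  · simpa using h.nonneg

lemma Lam_bdd {κ : ℝ → ℝ} (hκ : Wt κ) {φ : ℝ → ℝ} {C : ℝ} (h : Adm φ C) : BddFun (Lam κ φ) :=
  ⟨C, Lam_bound hκ h⟩

lemma Lam_meas {κ : ℝ → ℝ} (hκ : Wt κ) {φ : ℝ → ℝ} {C : ℝ} (h : Adm φ C) :
    Measurable (Lam κ φ) := by
  unfold Lam
  refine Measurable.ite measurableSet_Ioi ?_ measurable_const
  refine Measurable.div ?_ Real.measurable_log
  have h1 := h.meas
  have h2 := hκ.meas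
  have : StronglyMeasurable (fun q : ℝ × ℝ => (κ q.2)⁻¹ * φ (κ q.2 ^ (-(1 / Real.log q.1)))) :=
    Measurable.stronglyMeasurable (by fun_prop)
  exact (this.integral_prod_right' (ν := volume.restrict (Set.Ioi (0:ℝ)))).measurable

lemma Lam_mono {κ : ℝ → ℝ} (hκ : Wt κ) {φ ψ : ℝ → ℝ} {C D : ℝ} (h : Adm φ C) (h' : Adm ψ D)
    (hle : ∀ x, 0 < x → x ≤ 1 → φ x ≤ ψ x) (t : ℝ) : Lam κ φ t ≤ Lam κ ψ t := by
  unfold Lam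
  split_ifs with ht
  · have hu : 0 < Real.log t := Real.log_pos ht
    have hr : 0 < 1 / Real.log t := by positivity
    refine div_le_div_of_nonneg_right ?_ hu.le
    refine integral_mono (integrand_integrable hκ h hr) (integrand_integrable hκ h' hr) fun s => ?_
    exact mul_le_mul_of_nonneg_left (hle _ (hκ.x_mem hr s).1 (hκ.x_mem hr s).2)
      (inv_pos.2 (hκ.pos s)).le
  · exact le_rfl

lemma Adm.add {φ ψ : ℝ → ℝ} {C D : ℝ} (h : Adm φ C) (h' : Adm ψ D) : Adm (φ + ψ) (C + D) where
  meas := h.meas.add h'.meas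
  bound := fun x hx hx' => by
    have := h.bound x hx hx'
    have := h'.bound x hx hx'
    have := abs_add_le (φ x) (ψ x)
    simp only [Pi.add_apply]
    linarith

lemma Adm.smul {φ : ℝ → ℝ} {C : ℝ} (c : ℝ) (h : Adm φ C) : Adm (c • φ) (|c| * C) where
  meas := h.meas.const_smul c
  bound := fun x hx hx' => by
    simp only [Pi.smul_apply, smul_eq_mul, abs_mul, mul_assoc]
    exact mul_le_mul_of_nonneg_left (h.bound x hx hx') (abs_nonneg _)

lemma Lam_add {κ : ℝ → ℝ} (hκ : Wt κ) {φ ψ : ℝ → ℝ} {C D : ℝ} (h : Adm φ C) (h' : Adm ψ D) :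
    Lam κ (φ + ψ) = Lam κ φ + Lam κ ψ := by
  ext t
  simp only [Lam, Pi.add_apply]
  split_ifs with ht
  · have hu : 0 < Real.log t := Real.log_pos ht
    have hr : 0 < 1 / Real.log t := by positivity
    rw [← add_div, ← integral_add (integrand_integrable hκ h hr) (integrand_integrable hκ h' hr)]
    simp only [mul_add]
  · simp

lemma Lam_smul {κ : ℝ → ℝ} {φ : ℝ → ℝ} (c : ℝ) :
    Lam κ (c • φ) = c • Lam κ φ := by
  ext t
  simp only [Lam, Pi.smul_apply, smul_eq_mul]
  split_ifs with ht
  · rw [← mul_div_assoc, ← integral_const_mul]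
    congr 2
    ext s
    ring
  · simp

/-- Scaling of `Lam` under power maps. -/
lemma Lam_pow {κ : ℝ → ℝ} (hκ : Wt κ) {φ : ℝ → ℝ} {c : ℝ} (hc : 0 < c) {t : ℝ} (ht : 1 < t) :
    Lam κ (fun x => φ (x ^ (1 / c))) t = c * Lam κ φ (t ^ c) := by
  have ht' : 1 < t ^ c := Real.one_lt_rpow ht hc
  have hu : 0 < Real.log t := Real.log_pos ht
  simp only [Lam, if_pos ht, if_pos ht', Real.log_rpow (zero_lt_one.trans ht)]
  have : ∀ s, (κ s ^ (-(1 / Real.log t))) ^ (1 / c) = κ s ^ (-(1 / (c * Real.log t))) := by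
    intro s
    rw [← Real.rpow_mul (hκ.pos s).le]
    congr 1
    field_simp
  simp only [this]
  field_simp

lemma omega_Lam_pow {κ : ℝ → ℝ} (hκ : Wt κ) {ω : (ℝ → ℝ) →ₗ[ℝ] ℝ} (hω : GoodFn ω)
    {φ : ℝ → ℝ} {c C D : ℝ} (hc : 0 < c) (h : Adm φ C) (h' : Adm (fun x => φ (x ^ (1 / c))) D) :
    ω (Lam κ (fun x => φ (x ^ (1 / c)))) = c * ω (Lam κ φ) := by
  rw [← hω.pow _ (Lam_meas hκ h) (Lam_bdd hκ h) c hc, ← smul_eq_mul, ← map_smul]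
  refine hω.eq _ _ (Lam_meas hκ h') ?_ (Lam_bdd hκ h') ?_ ?_
  · exact ((Lam_meas hκ h).comp (by fun_prop : Measurable fun t : ℝ => t ^ c)).const_smul c
  · exact BddFun.smul c ⟨C, fun t => Lam_bound hκ h _⟩
  · refine tendsto_const_nhds.congr' ?_
    filter_upwards [eventually_gt_atTop 1] with t ht
    rw [Lam_pow hκ hc ht]
    simp

lemma Adm_id : Adm (fun x => x) 1 where
  meas := measurable_id
  bound := fun x hx _ => by rw [abs_of_pos hx, one_mul]

lemma Adm_mul {g : ℝ → ℝ} {C : ℝ} (hg : Measurable g) (hb : ∀ x, 0 < x → x ≤ 1 → |g x| ≤ C) :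
    Adm (fun x => x * g x) C where
  meas := measurable_id.mul hg
  bound := fun x hx hx' => by
    rw [abs_mul, abs_of_pos hx, mul_comm]
    exact mul_le_mul_of_nonneg_right (hb x hx hx') hx.le

open Polynomial in
lemma Adm_poly (P : ℝ[X]) : ∃ C, Adm (fun x => x * P.eval x) C := by
  have hc : ContinuousOn (fun x => P.eval x) (Set.Icc 0 1) := P.continuous.continuousOn
  obtain ⟨C, hC⟩ := isCompact_Icc.exists_bound_of_continuousOn hc
  exact ⟨C, Adm_mul P.continuous.measurable fun x hx hx' => hC x ⟨hx.le, hx'⟩⟩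

lemma omega_mono {κ : ℝ → ℝ} (hκ : Wt κ) {ω : (ℝ → ℝ) →ₗ[ℝ] ℝ} (hω : GoodFn ω) (n : ℕ) :
    ω (Lam κ (fun x => x * x ^ n)) = ω (Lam κ (fun x => x)) * (1 / ((n:ℝ) + 1)) := by
  have hn : (0:ℝ) < (n:ℝ) + 1 := by positivity
  have he : (fun x : ℝ => (fun y : ℝ => y) (x ^ (1 / (1 / ((n:ℝ) + 1))))) = fun x => x * x ^ n := by
    ext x
    rw [one_div_one_div]
    simp only
    rw [show ((n:ℝ) + 1) = ((n + 1 : ℕ) : ℝ) by push_cast; ring, Real.rpow_natCast, pow_succ']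
  have hA : Adm (fun x : ℝ => x * x ^ n) 1 := Adm_mul (by fun_prop) fun x hx hx' => by
    rw [abs_of_nonneg (by positivity)]
    exact pow_le_one₀ hx.le hx'
  have := omega_Lam_pow hκ hω (φ := fun y => y) (c := 1 / ((n:ℝ) + 1)) (by positivity) Adm_id
    (by rw [he]; exact hA)
  rw [he] at this
  rw [this, mul_comm]

open Polynomial in
lemma omega_poly {κ : ℝ → ℝ} (hκ : Wt κ) {ω : (ℝ → ℝ) →ₗ[ℝ] ℝ} (hω : GoodFn ω) (P : ℝ[X]) :
    ω (Lam κ (fun x => x * P.eval x)) = ω (Lam κ (fun x => x)) * ∫ x in (0:ℝ)..1, P.eval x := by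
  induction P using Polynomial.induction_on' with
  | add P Q hP hQ =>
    obtain ⟨C, hC⟩ := Adm_poly P
    obtain ⟨D, hD⟩ := Adm_poly Q
    have : (fun x => x * (P + Q).eval x) = (fun x => x * P.eval x) + (fun x => x * Q.eval x) := by
      ext x; simp [mul_add]
    rw [this, Lam_add hκ hC hD, map_add, hP, hQ]
    simp only [eval_add]
    rw [intervalIntegral.integral_add (P.continuous.intervalIntegrable _ _)
      (Q.continuous.intervalIntegrable _ _)]
    ring
  | monomial n a =>
    have : (fun x => x * (monomial n a).eval x) = a • (fun x : ℝ => x * x ^ n) := by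
      ext x; simp; ring
    rw [this, Lam_smul, map_smul, omega_mono hκ hω]
    simp
    ring

lemma omega_cont {κ : ℝ → ℝ} (hκ : Wt κ) {ω : (ℝ → ℝ) →ₗ[ℝ] ℝ} (hω : GoodFn ω) {g : ℝ → ℝ}
    (hg : Continuous g) :
    ω (Lam κ (fun x => x * g x)) = ω (Lam κ (fun x => x)) * ∫ x in (0:ℝ)..1, g x := by
  set A := ω (Lam κ (fun x => x)) with hA
  obtain ⟨C, hC⟩ := isCompact_Icc.exists_bound_of_continuousOn (hg.continuousOn (s := Set.Icc 0 1))
  have hgA : Adm (fun x => x * g x) C :=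
    Adm_mul hg.measurable fun x hx hx' => hC x ⟨hx.le, hx'⟩
  have key : ∀ ε > 0, |ω (Lam κ (fun x => x * g x)) - A * ∫ x in (0:ℝ)..1, g x|
      ≤ (|A| + |A|) * ε := by
    intro ε hε
    obtain ⟨P, hP⟩ := exists_polynomial_near_of_continuousOn 0 1 g hg.continuousOn ε hε
    obtain ⟨D, hD⟩ := Adm_poly P
    have hP2 := omega_poly hκ hω P
    have hE := Adm_id.smul ε
    have hE' := Adm_id.smul (-ε)
    have h1 : ω (Lam κ (fun x => x * g x)) ≤ ω (Lam κ (fun x => x * P.eval x)) + ε * A := by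
      rw [hA, ← smul_eq_mul, ← map_smul, ← map_add, ← Lam_smul, ← Lam_add hκ hD hE]
      refine hω.le _ _ (Lam_meas hκ hgA) (Lam_meas hκ (hD.add hE)) (Lam_bdd hκ hgA)
        (Lam_bdd hκ (hD.add hE)) (Lam_mono hκ hgA (hD.add hE) fun x hx hx' => ?_)
      have := (abs_lt.1 (hP x ⟨hx.le, hx'⟩)).1
      simp only [Pi.add_apply, Pi.smul_apply, smul_eq_mul]
      nlinarith
    have h2 : ω (Lam κ (fun x => x * P.eval x)) + (-ε) * A ≤ ω (Lam κ (fun x => x * g x)) := by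
      rw [hA, ← smul_eq_mul, ← map_smul, ← map_add, ← Lam_smul, ← Lam_add hκ hD hE']
      refine hω.le _ _ (Lam_meas hκ (hD.add hE')) (Lam_meas hκ hgA) (Lam_bdd hκ (hD.add hE'))
        (Lam_bdd hκ hgA) (Lam_mono hκ (hD.add hE') hgA fun x hx hx' => ?_)
      have := (abs_lt.1 (hP x ⟨hx.le, hx'⟩)).2
      simp only [Pi.add_apply, Pi.smul_apply, smul_eq_mul]
      nlinarith
    have h3 : |(∫ x in (0:ℝ)..1, P.eval x) - ∫ x in (0:ℝ)..1, g x| ≤ ε := by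
      rw [← intervalIntegral.integral_sub (P.continuous.intervalIntegrable _ _)
        (hg.intervalIntegrable _ _)]
      have := intervalIntegral.norm_integral_le_of_norm_le_const (a := (0:ℝ)) (b := 1) (C := ε)
        (f := fun x => P.eval x - g x) (fun x hx => by
          rw [Set.uIoc_of_le zero_le_one] at hx
          exact (hP x ⟨hx.1.le, hx.2⟩).le)
      simpa using this
    have h4 : |ω (Lam κ (fun x => x * g x)) - ω (Lam κ (fun x => x * P.eval x))| ≤ |A| * ε := by
      have : A * ε ≤ |A| * ε := mul_le_mul_of_nonneg_right (le_abs_self A) hε.le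
      rw [abs_le]
      constructor <;> linarith
    have h5 : |A * (∫ x in (0:ℝ)..1, P.eval x) - A * ∫ x in (0:ℝ)..1, g x| ≤ |A| * ε := by
      rw [← mul_sub, abs_mul]
      exact mul_le_mul_of_nonneg_left h3 (abs_nonneg _)
    rw [hP2] at h4
    rw [abs_le] at *
    constructor <;> linarith [h4.1, h4.2, h5.1, h5.2]
  by_contra hne
  have hpos : 0 < |ω (Lam κ (fun x => x * g x)) - A * ∫ x in (0:ℝ)..1, g x| :=
    abs_pos.2 (sub_ne_zero.2 hne)
  set d := |ω (Lam κ (fun x => x * g x)) - A * ∫ x in (0:ℝ)..1, g x|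
  have hA0 := abs_nonneg A
  have := key (d / (2 * (|A| + |A| + 1))) (by positivity)
  have h2 : (|A| + |A|) * (d / (2 * (|A| + |A| + 1))) < d := by
    rw [← mul_div_assoc, div_lt_iff₀ (by positivity)]
    nlinarith
  linarith

/-! ### Tauberian step: sharp cut-off -/

/-- The sharp cut-off. -/
noncomputable def phiH : ℝ → ℝ := fun x => if Real.exp (-1) ≤ x then 1 else 0

lemma phiH_meas : Measurable phiH :=
  Measurable.ite measurableSet_Ici measurable_const measurable_const

lemma Adm_phiH : Adm phiH (Real.exp 1) where
  meas := phiH_meas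
  bound := fun x hx _ => by
    unfold phiH
    split_ifs with h
    · have := mul_le_mul_of_nonneg_left h (Real.exp_pos 1).le
      rw [← Real.exp_add] at this
      simpa using this
    · simp only [abs_zero]; positivity

lemma rpow_ge_iff {c x : ℝ} (hc : 0 < c) (hx : 0 < x) :
    Real.exp (-1) ≤ x ^ (1 / c) ↔ Real.exp (-c) ≤ x := by
  rw [Real.rpow_def_of_pos hx, Real.exp_le_exp, ← Real.le_log_iff_exp_le hx, mul_one_div,
    le_div_iff₀ hc]
  simp

lemma Adm_phiH_pow {c : ℝ} (hc : 0 < c) : Adm (fun x => phiH (x ^ (1 / c))) (Real.exp c) where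
  meas := phiH_meas.comp (by fun_prop)
  bound := fun x hx _ => by
    unfold phiH
    simp only [rpow_ge_iff hc hx]
    split_ifs with h
    · have := mul_le_mul_of_nonneg_left h (Real.exp_pos c).le
      rw [← Real.exp_add] at this
      simpa using this
    · simp only [abs_zero]; positivity

/-- Continuous interpolation. -/
noncomputable def gE (c : ℝ) : ℝ → ℝ := fun x =>
  max 0 (min 1 ((x - Real.exp (-c)) / (Real.exp (-1) - Real.exp (-c)))) / max x (Real.exp (-c))

lemma gE_cont (c : ℝ) : Continuous (gE c) := by
  unfold gE
  refine Continuous.div (by fun_prop) (by fun_prop) fun x => ?_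
  exact (lt_of_lt_of_le (Real.exp_pos _) (le_max_right _ _)).ne'

lemma gE_nonneg (c x : ℝ) : 0 ≤ gE c x :=
  div_nonneg (le_max_left _ _) ((Real.exp_pos _).le.trans (le_max_right _ _))

lemma gE_zero {c : ℝ} (hc : 1 < c) {x : ℝ} (hx : x ≤ Real.exp (-c)) : gE c x = 0 := by
  have h : 0 < Real.exp (-1) - Real.exp (-c) := sub_pos.2 (Real.exp_lt_exp.2 (by linarith))
  have h1 : (x - Real.exp (-c)) / (Real.exp (-1) - Real.exp (-c)) ≤ 0 :=
    div_nonpos_of_nonpos_of_nonneg (by linarith) h.le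
  unfold gE
  rw [max_eq_left ((min_le_right _ _).trans h1), zero_div]

lemma gE_le {c : ℝ} {x : ℝ} (hx : Real.exp (-c) ≤ x) : gE c x ≤ x⁻¹ := by
  unfold gE
  rw [max_eq_left hx, inv_eq_one_div]
  refine div_le_div_of_nonneg_right ?_ ((Real.exp_pos _).le.trans hx)
  exact max_le zero_le_one (min_le_left _ _)

lemma gE_eq {c : ℝ} (hc : 1 < c) {x : ℝ} (hx : Real.exp (-1) ≤ x) : gE c x = x⁻¹ := by
  have h : 0 < Real.exp (-1) - Real.exp (-c) := sub_pos.2 (Real.exp_lt_exp.2 (by linarith))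
  have h1 : 1 ≤ (x - Real.exp (-c)) / (Real.exp (-1) - Real.exp (-c)) := by
    rw [le_div_iff₀ h]; linarith
  unfold gE
  rw [max_eq_left (show Real.exp (-c) ≤ x by linarith), min_eq_left h1, max_eq_right zero_le_one,
    inv_eq_one_div]

lemma gE_int_ge {c : ℝ} (hc : 1 < c) : 1 ≤ ∫ x in (0:ℝ)..1, gE c x := by
  have hi : ∀ a b, IntervalIntegrable (gE c) volume a b := (gE_cont c).intervalIntegrable
  have hb := Real.exp_pos (-1)
  have hb1 : Real.exp (-1) ≤ 1 := Real.exp_le_one_iff.2 (by norm_num)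
  rw [← intervalIntegral.integral_add_adjacent_intervals (hi 0 (Real.exp (-1))) (hi _ 1)]
  have h1 : 0 ≤ ∫ x in (0:ℝ)..Real.exp (-1), gE c x :=
    intervalIntegral.integral_nonneg hb.le fun x _ => gE_nonneg c x
  have h2 : ∫ x in (Real.exp (-1))..1, gE c x = ∫ x in (Real.exp (-1))..1, x⁻¹ := by
    refine intervalIntegral.integral_congr fun x hx => ?_
    rw [Set.uIcc_of_le hb1] at hx
    exact gE_eq hc hx.1
  rw [h2, integral_inv_of_pos hb one_pos]
  simp only [one_div, Real.log_inv, Real.log_exp]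
  linarith

lemma gE_int_le {c : ℝ} (hc : 1 < c) : ∫ x in (0:ℝ)..1, gE c x ≤ c := by
  have hi : ∀ a b, IntervalIntegrable (gE c) volume a b := (gE_cont c).intervalIntegrable
  have hb := Real.exp_pos (-c)
  have hb1 : Real.exp (-c) ≤ 1 := Real.exp_le_one_iff.2 (by linarith)
  rw [← intervalIntegral.integral_add_adjacent_intervals (hi 0 (Real.exp (-c))) (hi _ 1)]
  have h1 : ∫ x in (0:ℝ)..Real.exp (-c), gE c x = ∫ x in (0:ℝ)..Real.exp (-c), (0:ℝ) := by
    refine intervalIntegral.integral_congr fun x hx => ?_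
    rw [Set.uIcc_of_le hb.le] at hx
    exact gE_zero hc hx.2
  have h2 : ∫ x in (Real.exp (-c))..1, gE c x ≤ ∫ x in (Real.exp (-c))..1, x⁻¹ := by
    refine intervalIntegral.integral_mono_on hb1 (hi _ _) ?_ fun x hx => gE_le hx.1
    refine intervalIntegral.intervalIntegrable_inv (fun x hx => ?_) continuousOn_id
    rw [Set.uIcc_of_le hb1] at hx
    exact (lt_of_lt_of_le hb hx.1).ne'
  rw [integral_inv_of_pos hb one_pos] at h2
  simp only [one_div, Real.log_inv, Real.log_exp] at h2
  rw [h1]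
  simp
  linarith

lemma omega_phiH {κ : ℝ → ℝ} (hκ : Wt κ) {ω : (ℝ → ℝ) →ₗ[ℝ] ℝ} (hω : GoodFn ω) :
    ω (Lam κ phiH) = ω (Lam κ (fun x => x)) := by
  set A := ω (Lam κ (fun x => x)) with hA
  set B := ω (Lam κ phiH) with hB
  have z : ω 0 = 0 := map_zero ω
  have hb0 : BddFun 0 := ⟨0, fun x => by simp⟩
  have hL0 : Lam κ (fun _ => 0) = 0 := by ext t; simp [Lam]
  have hadm0 : Adm (fun _ => 0) 0 := ⟨measurable_const, fun x _ _ => by simp⟩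
  have hA0 : 0 ≤ A := by
    rw [← z, ← hL0]
    exact hω.le _ _ (Lam_meas hκ hadm0) (Lam_meas hκ Adm_id) (Lam_bdd hκ hadm0) (Lam_bdd hκ Adm_id)
      (Lam_mono hκ hadm0 Adm_id fun x hx _ => hx.le)
  have key : ∀ c : ℝ, 1 < c → B ≤ A * c ∧ A ≤ c * B := by
    intro c hc
    have hc0 : 0 < c := by linarith
    have hcont := omega_cont hκ hω (gE_cont c)
    obtain ⟨C, hC⟩ :=
      isCompact_Icc.exists_bound_of_continuousOn ((gE_cont c).continuousOn (s := Set.Icc 0 1))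
    have hgA : Adm (fun x => x * gE c x) C :=
      Adm_mul (gE_cont c).measurable fun x hx hx' => hC x ⟨hx.le, hx'⟩
    have h1 : B ≤ ω (Lam κ (fun x => x * gE c x)) := by
      refine hω.le _ _ (Lam_meas hκ Adm_phiH) (Lam_meas hκ hgA) (Lam_bdd hκ Adm_phiH)
        (Lam_bdd hκ hgA) (Lam_mono hκ Adm_phiH hgA fun x hx hx' => ?_)
      unfold phiH
      split_ifs with h
      · rw [gE_eq hc h, mul_inv_cancel₀ hx.ne']
      · exact mul_nonneg hx.le (gE_nonneg c x)
    have h2 : ω (Lam κ (fun x => x * gE c x)) ≤ c * B := by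
      rw [hB, ← omega_Lam_pow hκ hω hc0 Adm_phiH (Adm_phiH_pow hc0)]
      refine hω.le _ _ (Lam_meas hκ hgA) (Lam_meas hκ (Adm_phiH_pow hc0)) (Lam_bdd hκ hgA)
        (Lam_bdd hκ (Adm_phiH_pow hc0)) (Lam_mono hκ hgA (Adm_phiH_pow hc0) fun x hx hx' => ?_)
      unfold phiH
      simp only [rpow_ge_iff hc0 hx]
      split_ifs with h
      · calc x * gE c x ≤ x * x⁻¹ := mul_le_mul_of_nonneg_left (gE_le h) hx.le
          _ = 1 := mul_inv_cancel₀ hx.ne'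
      · rw [gE_zero hc (not_le.1 h).le, mul_zero]
    rw [hcont] at h1 h2
    exact ⟨h1.trans (mul_le_mul_of_nonneg_left (gE_int_le hc) hA0),
      le_trans (by simpa using mul_le_mul_of_nonneg_left (gE_int_ge hc) hA0) h2⟩
  have t1 : Tendsto (fun c : ℝ => A * c) (nhdsWithin 1 (Set.Ioi 1)) (nhds (A * 1)) :=
    (Continuous.tendsto (by fun_prop) 1).mono_left nhdsWithin_le_nhds
  have t2 : Tendsto (fun c : ℝ => c * B) (nhdsWithin 1 (Set.Ioi 1)) (nhds (1 * B)) :=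
    (Continuous.tendsto (by fun_prop) 1).mono_left nhdsWithin_le_nhds
  apply le_antisymm
  · rw [← mul_one A]
    exact ge_of_tendsto t1 (eventually_nhdsWithin_of_forall fun c hc => (key c hc).1)
  · rw [← one_mul B]
    exact ge_of_tendsto t2 (eventually_nhdsWithin_of_forall fun c hc => (key c hc).2)

/-! ### The heat function -/

/-- The normalised heat function. -/
noncomputable def Gk (κ : ℝ → ℝ) (q : ℝ) : ℝ → ℝ := fun l =>
  if 0 < l then (∫ s in Set.Ioi (0:ℝ), Real.exp (-(κ s / l) ^ q)) / l else 0

lemma exp_bound {q : ℝ} (hq : 0 < q) :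
    ∃ C : ℝ, 1 ≤ C ∧ ∀ x : ℝ, 0 ≤ x → Real.exp (-x ^ q) ≤ C * (1 / (1 + x) ^ 2) := by
  obtain ⟨n, hn⟩ := exists_nat_ge (2 / q)
  have hn' : 2 ≤ q * n := by rwa [div_le_iff₀' hq] at hn
  have hf : (0:ℝ) < n.factorial := by exact_mod_cast n.factorial_pos
  refine ⟨4 * (1 + n.factorial), by linarith, fun x hx => ?_⟩
  have hx0 : 0 ≤ x ^ q := Real.rpow_nonneg hx q
  have h1 := Real.pow_div_factorial_le_exp _ hx0 n
  rw [div_le_iff₀ hf, ← Real.rpow_natCast, ← Real.rpow_mul hx] at h1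
  have h2 : 1 ≤ Real.exp (x ^ q) := Real.one_le_exp hx0
  have h3 : (1 + x) ^ 2 ≤ 4 * (1 + n.factorial) * Real.exp (x ^ q) := by
    rcases le_total x 1 with h | h
    · have : (1 + x) ^ 2 ≤ 4 := by nlinarith
      nlinarith [mul_nonneg hf.le (Real.exp_pos (x ^ q)).le]
    · have h4 : x ^ 2 ≤ x ^ (q * n) := by
        rw [← Real.rpow_natCast]
        exact Real.rpow_le_rpow_of_exponent_le h (by exact_mod_cast hn')
      nlinarith
  rw [Real.exp_neg, mul_one_div, inv_eq_one_div, div_le_div_iff₀ (Real.exp_pos _) (by positivity),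
    one_mul]
  exact h3

lemma sq_deriv {t : ℝ} (ht : 0 < t) (x : ℝ) (hx : 0 ≤ x) :
    HasDerivAt (fun s : ℝ => -(t / (t + s))) (t / (t + x) ^ 2) x := by
  have h1 : HasDerivAt (fun s : ℝ => t + s) 1 x := (hasDerivAt_id x).const_add t
  have h2 := ((hasDerivAt_const x t).div h1 (by positivity)).neg
  refine h2.congr_deriv ?_
  field_simp
  ring

lemma sq_tendsto (t : ℝ) : Tendsto (fun s : ℝ => -(t / (t + s))) atTop (nhds 0) := by
  have h1 : Tendsto (fun s : ℝ => t + s) atTop atTop := tendsto_atTop_add_const_left _ _ tendsto_id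
  simpa using (h1.const_div_atTop t).neg

lemma sq_integrable {t a : ℝ} (ht : 0 < t) (ha : 0 ≤ a) :
    IntegrableOn (fun s : ℝ => t / (t + s) ^ 2) (Set.Ioi a) :=
  integrableOn_Ioi_deriv_of_nonneg' (fun x hx => sq_deriv ht x (ha.trans hx))
    (fun x _ => by positivity) (sq_tendsto t)

lemma sq_integral {t a : ℝ} (ht : 0 < t) (ha : 0 ≤ a) :
    ∫ s in Set.Ioi a, t / (t + s) ^ 2 = t / (t + a) := by
  rw [integral_Ioi_of_hasDerivAt_of_nonneg' (fun x hx => sq_deriv ht x (ha.trans hx))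
    (fun x _ => by positivity) (sq_tendsto t)]
  simp

lemma expq_cont {q : ℝ} (hq : 0 < q) : Continuous (fun x : ℝ => Real.exp (-x ^ q)) :=
  Real.continuous_exp.comp (Real.continuous_rpow_const hq.le).neg

/-- Incomplete integral. -/
noncomputable def Iq (q y : ℝ) : ℝ := ∫ x in (0:ℝ)..y, Real.exp (-x ^ q)

lemma Iq_deriv {q : ℝ} (hq : 0 < q) (y : ℝ) : HasDerivAt (Iq q) (Real.exp (-y ^ q)) y :=
  ((expq_cont hq).integral_hasStrictDerivAt 0 y).hasDerivAt

lemma Iq_cont {q : ℝ} (hq : 0 < q) : Continuous (Iq q) :=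
  continuous_iff_continuousAt.2 fun y => (Iq_deriv hq y).continuousAt

lemma Iq_le {q : ℝ} (hq : 0 < q) {y : ℝ} (hy : 0 ≤ y) : 0 ≤ Iq q y ∧ Iq q y ≤ y := by
  unfold Iq
  constructor
  · exact intervalIntegral.integral_nonneg hy fun x _ => (Real.exp_pos _).le
  · calc ∫ x in (0:ℝ)..y, Real.exp (-x ^ q) ≤ ∫ x in (0:ℝ)..y, (1:ℝ) := by
          refine intervalIntegral.integral_mono_on hy ((expq_cont hq).intervalIntegrable _ _)
            (continuous_const.intervalIntegrable _ _) fun x hx => ?_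
          exact Real.exp_le_one_iff.2 (neg_nonpos.2 (Real.rpow_nonneg hx.1 q))
      _ = y := by simp

lemma Iq_tail {q C : ℝ} (hq : 0 < q)
    (hC : ∀ x : ℝ, 0 ≤ x → Real.exp (-x ^ q) ≤ C * (1 / (1 + x) ^ 2)) {y : ℝ} (hy : 0 ≤ y) :
    0 ≤ Real.Gamma (1 / q + 1) - Iq q y ∧
      Real.Gamma (1 / q + 1) - Iq q y ≤ C * (1 / (1 + y)) := by
  have hIntg : ∀ a : ℝ, 0 ≤ a → IntegrableOn (fun x : ℝ => Real.exp (-x ^ q)) (Set.Ioi a) := by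
    intro a ha
    refine Integrable.mono' ((sq_integrable one_pos ha).const_mul C)
      (expq_cont hq).aestronglyMeasurable ?_
    refine (ae_restrict_iff' measurableSet_Ioi).2 (ae_of_all _ fun x hx => ?_)
    rw [Real.norm_eq_abs, abs_of_pos (Real.exp_pos _)]
    exact hC x (ha.trans (le_of_lt hx))
  have h1 : Real.Gamma (1 / q + 1) - Iq q y = ∫ x in Set.Ioi y, Real.exp (-x ^ q) := by
    rw [← integral_exp_neg_rpow hq, Iq,
      ← intervalIntegral.integral_interval_add_Ioi (hIntg 0 le_rfl) (hIntg y hy)]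
    ring
  rw [h1]
  constructor
  · exact setIntegral_nonneg measurableSet_Ioi fun x _ => (Real.exp_pos _).le
  · rw [← sq_integral one_pos hy, ← integral_const_mul]
    exact setIntegral_mono_on (hIntg y hy) ((sq_integrable one_pos hy).const_mul C) measurableSet_Ioi
      fun x hx => hC x (hy.trans (le_of_lt hx))

lemma heat_pt {κ : ℝ → ℝ} (hκ : Wt κ) {q C : ℝ} (hC1 : 1 ≤ C)
    (hC : ∀ x : ℝ, 0 ≤ x → Real.exp (-x ^ q) ≤ C * (1 / (1 + x) ^ 2))
    {l s : ℝ} (hl : 0 < l) (hs : 0 < s) :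
    Real.exp (-(κ s / l) ^ q) ≤ C * l * (l / (l + s) ^ 2) := by
  have hk := hκ.pos s
  have h1 : 0 ≤ κ s / l := by positivity
  refine (hC _ h1).trans ?_
  rw [show C * l * (l / (l + s) ^ 2) = C * (1 / (1 + s / l) ^ 2) by field_simp]
  have := hκ.le s
  gcongr
  linarith

lemma heat_integrable {κ : ℝ → ℝ} (hκ : Wt κ) {q C : ℝ} (hC1 : 1 ≤ C)
    (hC : ∀ x : ℝ, 0 ≤ x → Real.exp (-x ^ q) ≤ C * (1 / (1 + x) ^ 2))
    {l : ℝ} (hl : 0 < l) :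
    IntegrableOn (fun s => Real.exp (-(κ s / l) ^ q)) (Set.Ioi 0) := by
  refine Integrable.mono' ((sq_integrable hl le_rfl).const_mul (C * l)) ?_ ?_
  · have := hκ.meas
    exact Measurable.aestronglyMeasurable (by fun_prop)
  · refine (ae_restrict_iff' measurableSet_Ioi).2 (ae_of_all _ fun x hx => ?_)
    rw [Real.norm_eq_abs, abs_of_pos (Real.exp_pos _)]
    exact heat_pt hκ hC1 hC hl hx

lemma Gk_bound {κ : ℝ → ℝ} (hκ : Wt κ) {q C : ℝ} (hC1 : 1 ≤ C)
    (hC : ∀ x : ℝ, 0 ≤ x → Real.exp (-x ^ q) ≤ C * (1 / (1 + x) ^ 2)) (l : ℝ) :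
    |Gk κ q l| ≤ C := by
  unfold Gk
  split_ifs with hl
  · have h0 : 0 ≤ ∫ s in Set.Ioi (0:ℝ), Real.exp (-(κ s / l) ^ q) :=
      setIntegral_nonneg measurableSet_Ioi fun x _ => (Real.exp_pos _).le
    rw [abs_of_nonneg (by positivity), div_le_iff₀ hl]
    calc ∫ s in Set.Ioi (0:ℝ), Real.exp (-(κ s / l) ^ q)
        ≤ ∫ s in Set.Ioi (0:ℝ), C * l * (l / (l + s) ^ 2) :=
          setIntegral_mono_on (heat_integrable hκ hC1 hC hl)
            ((sq_integrable hl le_rfl).const_mul (C * l)) measurableSet_Ioi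
            fun x hx => heat_pt hκ hC1 hC hl hx
      _ = C * l := by
          rw [integral_const_mul, sq_integral hl le_rfl, add_zero, div_self hl.ne', mul_one]
  · simpa using by linarith

lemma Gk_meas {κ : ℝ → ℝ} (hκ : Wt κ) (q : ℝ) : Measurable (Gk κ q) := by
  unfold Gk
  refine Measurable.ite measurableSet_Ioi (Measurable.div ?_ measurable_id) measurable_const
  have h2 := hκ.meas
  have : StronglyMeasurable (fun z : ℝ × ℝ => Real.exp (-(κ z.2 / z.1) ^ q)) :=
    Measurable.stronglyMeasurable (by fun_prop)
  exact (this.integral_prod_right' (ν := volume.restrict (Set.Ioi (0:ℝ)))).measurable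

lemma inner_int {q k t : ℝ} (hq : 0 < q) (hk : 0 < k) (ht : 1 < t) :
    ∫ l in (1:ℝ)..t, Real.exp (-(k / l) ^ q) / l / l = (Iq q k - Iq q (k / t)) / k := by
  have hpos : ∀ x ∈ Set.uIcc 1 t, 0 < x := by
    intro x hx
    rw [Set.uIcc_of_le ht.le] at hx
    exact lt_of_lt_of_le one_pos hx.1
  rw [intervalIntegral.integral_eq_sub_of_hasDerivAt (f := fun l => -Iq q (k / l) / k)]
  · simp; ring
  · intro x hx
    have hx0 := hpos x hx
    have h1 : HasDerivAt (fun l : ℝ => k / l) (-k / x ^ 2) x := by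
      have := (hasDerivAt_const x k).div (hasDerivAt_id x) hx0.ne'
      refine this.congr_deriv ?_
      simp
    have h2 := (((Iq_deriv hq (k / x)).comp x h1).neg).div_const k
    refine h2.congr_deriv ?_
    field_simp
  · refine ContinuousOn.intervalIntegrable ?_
    have h3 : ContinuousOn (fun l : ℝ => k / l) (Set.uIcc 1 t) :=
      continuousOn_const.div continuousOn_id fun x hx => (hpos x hx).ne'
    have h4 := (expq_cont hq).comp_continuousOn h3
    exact (h4.div continuousOn_id fun x hx => (hpos x hx).ne').div continuousOn_id
      fun x hx => (hpos x hx).ne'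

lemma Mop_Gk {κ : ℝ → ℝ} (hκ : Wt κ) {q C : ℝ} (hq : 0 < q) (hC1 : 1 ≤ C)
    (hC : ∀ x : ℝ, 0 ≤ x → Real.exp (-x ^ q) ≤ C * (1 / (1 + x) ^ 2)) {t : ℝ} (ht : 1 < t) :
    Mop (Gk κ q) t =
      (∫ s in Set.Ioi (0:ℝ), (Iq q (κ s) - Iq q (κ s / t)) / κ s) / Real.log t := by
  have ht0 : 0 < t := zero_lt_one.trans ht
  simp only [Mop, if_pos ht]
  congr 1
  have h1 : ∫ l in (1:ℝ)..t, Gk κ q l / l =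
      ∫ l in (1:ℝ)..t, ∫ s in Set.Ioi (0:ℝ), Real.exp (-(κ s / l) ^ q) / l / l := by
    refine intervalIntegral.integral_congr fun l hl => ?_
    rw [Set.uIcc_of_le ht.le] at hl
    have hl0 : 0 < l := lt_of_lt_of_le one_pos hl.1
    simp only [Gk, if_pos hl0, integral_div]
  rw [h1, intervalIntegral_integral_swap]
  · refine setIntegral_congr_fun measurableSet_Ioi fun s _ => ?_
    exact inner_int hq (hκ.pos s) ht
  · rw [Set.uIoc_of_le ht.le]
    have hb : Integrable (fun z : ℝ × ℝ => C * t * (t / (t + z.2) ^ 2))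
        ((volume.restrict (Set.Ioc 1 t)).prod (volume.restrict (Set.Ioi (0:ℝ)))) :=
      Integrable.comp_snd ((sq_integrable ht0 le_rfl).const_mul (C * t)) _
    have h2 := hκ.meas
    refine Integrable.mono' hb (Measurable.aestronglyMeasurable ?_) ?_
    · unfold Function.uncurry
      fun_prop
    · rw [Measure.prod_restrict]
      refine (ae_restrict_iff' (measurableSet_Ioc.prod measurableSet_Ioi)).2
        (ae_of_all _ fun z hz => ?_)
      obtain ⟨⟨hz1, hz2⟩, hz3⟩ := hz
      have hz0 : 0 < z.1 := zero_lt_one.trans hz1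
      have hk := hκ.pos z.2
      have h3 : Real.exp (-(κ z.2 / z.1) ^ q) ≤ Real.exp (-(κ z.2 / t) ^ q) := by
        gcongr
      simp only [Function.uncurry]
      rw [Real.norm_eq_abs, abs_of_nonneg (by positivity)]
      refine le_trans ?_ (h3.trans (heat_pt hκ hC1 hC ht0 hz3))
      rw [div_div]
      refine div_le_self (Real.exp_pos _).le ?_
      nlinarith

lemma phiH_iff {k t : ℝ} (hk : 0 < k) (ht : 1 < t) :
    phiH (k ^ (-(1 / Real.log t))) = if k ≤ t then 1 else 0 := by
  have hu : 0 < Real.log t := Real.log_pos ht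
  have : Real.exp (-1) ≤ k ^ (-(1 / Real.log t)) ↔ k ≤ t := by
    rw [Real.rpow_def_of_pos hk, Real.exp_le_exp, mul_neg, neg_le_neg_iff, mul_one_div,
      div_le_one hu, Real.log_le_log_iff hk (zero_lt_one.trans ht)]
  simp only [phiH, this]

lemma diff_pt {κ : ℝ → ℝ} (hκ : Wt κ) {q C : ℝ} (hq : 0 < q) (hC1 : 1 ≤ C)
    (hC : ∀ x : ℝ, 0 ≤ x → Real.exp (-x ^ q) ≤ C * (1 / (1 + x) ^ 2)) {t : ℝ} (ht : 1 < t)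
    {s : ℝ} (hs : 0 < s) :
    ‖Real.Gamma (1 / q + 1) * ((κ s)⁻¹ * phiH (κ s ^ (-(1 / Real.log t))))
      - (Iq q (κ s) - Iq q (κ s / t)) / κ s‖ ≤
      4 * C * (t / (t + s) ^ 2) + C * (1 / (1 + s) ^ 2) := by
  have ht0 : 0 < t := zero_lt_one.trans ht
  have hk := hκ.pos s
  have hks := hκ.le s
  rw [phiH_iff hk ht]
  set k := κ s
  set γ := Real.Gamma (1 / q + 1)
  have a1 := Iq_tail hq hC hk.le
  have a2 := Iq_tail hq hC (y := k / t) (by positivity)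
  have a3 := Iq_le hq (y := k / t) (by positivity)
  have b1 : (γ - Iq q k) / k ≤ C * (1 / (1 + s) ^ 2) := by
    rw [div_le_iff₀ hk]
    refine a1.2.trans ?_
    rw [mul_assoc]
    refine mul_le_mul_of_nonneg_left ?_ (by linarith)
    rw [one_div_mul_eq_div, div_le_div_iff₀ (by positivity) (by positivity)]
    nlinarith
  have b1' : 0 ≤ (γ - Iq q k) / k := div_nonneg a1.1 hk.le
  rw [Real.norm_eq_abs]
  split_ifs with h
  · have e : γ * (k⁻¹ * 1) - (Iq q k - Iq q (k / t)) / k = (γ - Iq q k) / k + Iq q (k / t) / k := by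
      field_simp; ring
    have b2 : Iq q (k / t) / k ≤ 4 * C * (t / (t + s) ^ 2) := by
      calc Iq q (k / t) / k ≤ (k / t) / k := by gcongr; exact a3.2
        _ = 1 / t := by field_simp
        _ ≤ 4 * (t / (t + s) ^ 2) := by
            rw [← mul_div_assoc, div_le_div_iff₀ ht0 (by positivity)]
            nlinarith
        _ ≤ _ := by
            have : 0 ≤ t / (t + s) ^ 2 := by positivity
            nlinarith
    have b3 : 0 ≤ Iq q (k / t) / k := div_nonneg a3.1 hk.le
    rw [e, abs_of_nonneg (by positivity)]
    linarith
  · have e : γ * (k⁻¹ * 0) - (Iq q k - Iq q (k / t)) / k =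
        (γ - Iq q k) / k - (γ - Iq q (k / t)) / k := by
      field_simp; ring
    have b2 : (γ - Iq q (k / t)) / k ≤ 4 * C * (t / (t + s) ^ 2) := by
      have h' := not_le.1 h
      rw [div_le_iff₀ hk]
      refine a2.2.trans ?_
      rw [show 4 * C * (t / (t + s) ^ 2) * k = C * (4 * (t * k) / (t + s) ^ 2) by ring]
      refine mul_le_mul_of_nonneg_left ?_ (by linarith)
      rw [show 1 / (1 + k / t) = t / (t + k) by field_simp,
        div_le_div_iff₀ (by positivity) (by positivity)]
      have h6 : (t + s) ^ 2 ≤ (2 * k) ^ 2 := by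
        apply pow_le_pow_left₀ (by positivity); linarith
      have : (t + s) ^ 2 ≤ 4 * k * (t + k) := by nlinarith
      nlinarith
    have b3 : 0 ≤ (γ - Iq q (k / t)) / k := div_nonneg a2.1 hk.le
    rw [e, abs_le]
    have c1 : 0 ≤ C * (1 / (1 + s) ^ 2) := b1'.trans b1
    have c2 : 0 ≤ 4 * C * (t / (t + s) ^ 2) := b3.trans b2
    constructor <;> linarith

lemma Mop_diff {κ : ℝ → ℝ} (hκ : Wt κ) {q C : ℝ} (hq : 0 < q) (hC1 : 1 ≤ C)
    (hC : ∀ x : ℝ, 0 ≤ x → Real.exp (-x ^ q) ≤ C * (1 / (1 + x) ^ 2)) {t : ℝ} (ht : 1 < t) :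
    |Real.Gamma (1 / q + 1) * Lam κ phiH t - Mop (Gk κ q) t| ≤ 5 * C / Real.log t := by
  have ht0 : 0 < t := zero_lt_one.trans ht
  have hu : 0 < Real.log t := Real.log_pos ht
  have hr : 0 < 1 / Real.log t := by positivity
  rw [Mop_Gk hκ hq hC1 hC ht]
  simp only [Lam, if_pos ht]
  set γ := Real.Gamma (1 / q + 1)
  have hB : IntegrableOn (fun s : ℝ => 4 * C * (t / (t + s) ^ 2) + C * (1 / (1 + s) ^ 2))
      (Set.Ioi 0) :=
    ((sq_integrable ht0 le_rfl).const_mul _).add ((sq_integrable one_pos le_rfl).const_mul _)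
  have hae : ∀ᵐ s ∂(volume.restrict (Set.Ioi (0:ℝ))),
      ‖γ * ((κ s)⁻¹ * phiH (κ s ^ (-(1 / Real.log t))))
      - (Iq q (κ s) - Iq q (κ s / t)) / κ s‖ ≤
      4 * C * (t / (t + s) ^ 2) + C * (1 / (1 + s) ^ 2) :=
    (ae_restrict_iff' measurableSet_Ioi).2
      (ae_of_all _ fun s hs => diff_pt hκ hq hC1 hC ht hs)
  have m1 := hκ.meas
  have m2 := phiH_meas
  have m3 := (Iq_cont hq).measurable
  have hD : IntegrableOn (fun s => γ * ((κ s)⁻¹ * phiH (κ s ^ (-(1 / Real.log t))))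
      - (Iq q (κ s) - Iq q (κ s / t)) / κ s) (Set.Ioi 0) :=
    Integrable.mono' hB (Measurable.aestronglyMeasurable (by fun_prop)) hae
  have hF := (integrand_integrable hκ Adm_phiH hr).const_mul γ
  have hG : IntegrableOn (fun s => (Iq q (κ s) - Iq q (κ s / t)) / κ s) (Set.Ioi 0) := by
    have := Integrable.sub hF hD
    refine this.congr (ae_of_all _ fun s => ?_)
    simp
  have e := norm_integral_le_of_norm_le hB hae
  rw [integral_sub hF hG, integral_const_mul, integral_add ((sq_integrable ht0 le_rfl).const_mul _)
    ((sq_integrable one_pos le_rfl).const_mul _), integral_const_mul, integral_const_mul,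
    sq_integral ht0 le_rfl, sq_integral one_pos le_rfl, add_zero, div_self ht0.ne'] at e
  rw [← mul_div_assoc, ← sub_div, abs_div, abs_of_pos hu]
  refine div_le_div_of_nonneg_right ?_ hu.le
  rw [Real.norm_eq_abs] at e
  refine e.trans ?_
  norm_num
  linarith

lemma Mop_meas {f : ℝ → ℝ} (hf : Measurable f) : Measurable (Mop f) := by
  have e : Mop f = fun t => if 1 < t then
      (∫ s in Set.Ioi (1:ℝ), if s ≤ t then f s / s else 0) / Real.log t else 0 := by
    ext t
    unfold Mop
    split_ifs with ht
    · congr 1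
      rw [intervalIntegral.integral_of_le ht.le]
      have : (fun s => if s ≤ t then f s / s else 0) = (Set.Iic t).indicator (fun s => f s / s) := by
        ext s; simp [Set.indicator]
      rw [this, setIntegral_indicator measurableSet_Iic, Set.Ioi_inter_Iic]
    · rfl
  rw [e]
  refine Measurable.ite measurableSet_Ioi (Measurable.div ?_ Real.measurable_log) measurable_const
  have : StronglyMeasurable (fun z : ℝ × ℝ => if z.2 ≤ z.1 then f z.2 / z.2 else 0) := by
    refine Measurable.stronglyMeasurable (Measurable.ite ?_ (by fun_prop) measurable_const)
    exact measurableSet_le measurable_snd measurable_fst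
  exact (this.integral_prod_right' (ν := volume.restrict (Set.Ioi (1:ℝ)))).measurable

lemma Mop_bdd {f : ℝ → ℝ} {C : ℝ} (hC0 : 0 ≤ C) (hC : ∀ x, |f x| ≤ C) (t : ℝ) : |Mop f t| ≤ C := by
  unfold Mop
  split_ifs with ht
  · have hu : 0 < Real.log t := Real.log_pos ht
    rw [abs_div, abs_of_pos hu, div_le_iff₀ hu, ← Real.norm_eq_abs]
    have hi : IntervalIntegrable (fun s : ℝ => C * s⁻¹) volume 1 t := by
      refine IntervalIntegrable.const_mul ?_ C
      refine intervalIntegral.intervalIntegrable_inv (fun x hx => ?_) continuousOn_id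
      rw [Set.uIcc_of_le ht.le] at hx
      exact (lt_of_lt_of_le one_pos hx.1).ne'
    refine (intervalIntegral.norm_integral_le_of_norm_le ht.le
      (ae_of_all _ fun s hs => ?_) hi).trans ?_
    · have : 0 < s := zero_lt_one.trans hs.1
      rw [Real.norm_eq_abs, abs_div, abs_of_pos this, div_eq_mul_inv]
      exact mul_le_mul_of_nonneg_right (hC s) (by positivity)
    · rw [intervalIntegral.integral_const_mul, integral_inv_of_pos one_pos (by linarith), div_one]
  · simpa using hC0

lemma omega_Gk {κ : ℝ → ℝ} (hκ : Wt κ) {ω : (ℝ → ℝ) →ₗ[ℝ] ℝ} (hω : GoodFn ω)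
    (hM : ∀ f : ℝ → ℝ, Measurable f → BddFun f → ω (Mop f) = ω f) {q : ℝ} (hq : 0 < q) :
    ω (Gk κ q) = Real.Gamma (1 / q + 1) * ω (Lam κ (fun x => x)) := by
  obtain ⟨C, hC1, hC⟩ := exp_bound hq
  have hb := Gk_bound hκ hC1 hC
  rw [← hM _ (Gk_meas hκ q) ⟨C, hb⟩, ← omega_phiH hκ hω, ← smul_eq_mul, ← map_smul]
  refine (hω.eq _ _ ((Lam_meas hκ Adm_phiH).const_smul _) (Mop_meas (Gk_meas hκ q))
    ((Lam_bdd hκ Adm_phiH).smul _) ⟨C, Mop_bdd (by linarith) hb⟩ ?_).symm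
  have h0 : Tendsto (fun t => 5 * C / Real.log t) atTop (nhds 0) :=
    Real.tendsto_log_atTop.const_div_atTop _
  refine squeeze_zero_norm' ?_ h0
  filter_upwards [eventually_gt_atTop 1] with t ht
  exact Mop_diff hκ hq hC1 hC ht

/-! ### Reduction to the normalised weight -/

/-- The normalised weight attached to `μ`. -/
noncomputable def kap (p K : ℝ) (μ : ℝ → ℝ) : ℝ → ℝ := fun s => (K / μ (max s 0)) ^ p

lemma Wt_kap {p : ℝ} (hp : 1 ≤ p) {K : ℝ} (hK : 0 < K)
    {μ : ℝ → ℝ} (hμpos : ∀ s : ℝ, 0 ≤ s → 0 < μ s)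
    (hmono : AntitoneOn μ (Set.Ici 0))
    (hμbd : ∀ s : ℝ, 0 ≤ s → μ s ≤ K * (1 + s) ^ (-(1 / p))) : Wt (kap p K μ) := by
  have hp0 : 0 < p := by linarith
  have h0 : ∀ s : ℝ, 0 ≤ max s 0 := fun s => le_max_right _ _
  have key : ∀ s, 1 + max s 0 ≤ kap p K μ s := by
    intro s
    have hm := hμpos _ (h0 s)
    have hb := hμbd _ (h0 s)
    have h1 : 0 < 1 + max s 0 := by linarith [h0 s]
    have h2 : (1 + max s 0) ^ (1 / p) ≤ K / μ (max s 0) := by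
      rw [Real.rpow_neg h1.le] at hb
      have h3 : 0 < (1 + max s 0) ^ (1 / p) := Real.rpow_pos_of_pos h1 _
      rw [le_div_iff₀ hm]
      calc (1 + max s 0) ^ (1 / p) * μ (max s 0)
          ≤ (1 + max s 0) ^ (1 / p) * (K * ((1 + max s 0) ^ (1 / p))⁻¹) := by gcongr
        _ = K := by field_simp
    calc 1 + max s 0 = ((1 + max s 0) ^ (1 / p)) ^ p := by
          rw [← Real.rpow_mul h1.le, one_div, inv_mul_cancel₀ hp0.ne', Real.rpow_one]
      _ ≤ _ := Real.rpow_le_rpow (by positivity) h2 hp0.le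
  refine ⟨?_, fun s => by linarith [key s, h0 s], fun s => by linarith [key s, le_max_left s 0]⟩
  have : Monotone (kap p K μ) := by
    intro a b hab
    unfold kap
    have hab' : max a 0 ≤ max b 0 := max_le_max_right 0 hab
    have := hμpos _ (h0 a)
    have := hμpos _ (h0 b)
    have := hmono (h0 a) (h0 b) hab'
    gcongr
  exact this.measurable

lemma heatFn_eq {p : ℝ} (hp : 1 ≤ p) {K : ℝ} (hK : 0 < K)
    {μ : ℝ → ℝ} (hμpos : ∀ s : ℝ, 0 ≤ s → 0 < μ s) :
    heatFn p μ = (K ^ p) • fun t => Gk (kap p K μ) (2 / p) (t / (K ^ p)⁻¹) := by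
  have hp0 : 0 < p := by linarith
  have hKp : 0 < K ^ p := Real.rpow_pos_of_pos hK _
  ext l
  simp only [heatFn, Gk, Pi.smul_apply, smul_eq_mul, div_inv_eq_mul]
  by_cases hl : 0 < l
  · have hl' : 0 < l * K ^ p := by positivity
    rw [if_pos hl, if_pos hl']
    have : ∫ s in Set.Ioi (0:ℝ), Real.exp (-(kap p K μ s / (l * K ^ p)) ^ (2 / p)) =
        ∫ s in Set.Ioi (0:ℝ), Real.exp (-(l ^ (-(2 / p)) * μ s ^ (-(2:ℝ)))) := by
      refine setIntegral_congr_fun measurableSet_Ioi fun s hs => ?_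
      have hs0 : (0:ℝ) ≤ s := le_of_lt hs
      have hm := hμpos s hs0
      have e : kap p K μ s / (l * K ^ p) = l⁻¹ * (μ s)⁻¹ ^ p := by
        simp only [kap, max_eq_left hs0]
        rw [Real.div_rpow hK.le hm.le, Real.inv_rpow hm.le]
        field_simp
      simp only [e]
      rw [Real.mul_rpow (by positivity) (by positivity), ← Real.rpow_mul (by positivity),
        mul_div_cancel₀ _ hp0.ne', Real.rpow_neg hl.le, Real.rpow_neg hm.le, Real.inv_rpow hl.le,
        Real.inv_rpow hm.le]
    rw [this]
    field_simp
  · have hl' : ¬ 0 < l * K ^ p := by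
      intro h
      exact hl (pos_of_mul_pos_left h hKp.le)
    rw [if_neg hl, if_neg hl', mul_zero]

lemma zeta_eq {p : ℝ} (hp : 1 ≤ p) {K : ℝ} (hK : 0 < K)
    {μ : ℝ → ℝ} (hμpos : ∀ s : ℝ, 0 ≤ s → 0 < μ s) {t : ℝ} (ht : Real.exp 1 < t) :
    zetaPFn p μ t = K ^ p * p * K ^ (1 / Real.log t) * Lam (kap p K μ) (fun x => x) (t ^ p) := by
  have hp0 : 0 < p := by linarith
  have ht1 : 1 < t := lt_trans (Real.one_lt_exp_iff.2 one_pos) ht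
  have ht0 : 0 < t := by linarith
  have hu : 0 < Real.log t := Real.log_pos ht1
  have ht' : 1 < t ^ p := Real.one_lt_rpow ht1 hp0
  simp only [zetaPFn, Lam, if_pos ht, if_pos ht', Real.log_rpow ht0]
  have : ∫ s in Set.Ioi (0:ℝ), μ s ^ (p + 1 / Real.log t) =
      ∫ s in Set.Ioi (0:ℝ), K ^ (p + 1 / Real.log t) *
        ((kap p K μ s)⁻¹ * kap p K μ s ^ (-(1 / (p * Real.log t)))) := by
    refine setIntegral_congr_fun measurableSet_Ioi fun s hs => ?_
    have hs0 : (0:ℝ) ≤ s := le_of_lt hs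
    have hm := hμpos s hs0
    have hd : 0 < K / μ s := by positivity
    simp only [kap, max_eq_left hs0]
    rw [← Real.rpow_neg hd.le, ← Real.rpow_mul hd.le, ← Real.rpow_add hd,
      show -p + p * -(1 / (p * Real.log t)) = -(p + 1 / Real.log t) by field_simp; ring,
      Real.rpow_neg hd.le, Real.div_rpow hK.le hm.le]
    have : 0 < K ^ (p + 1 / Real.log t) := Real.rpow_pos_of_pos hK _
    field_simp
  rw [this, integral_const_mul, Real.rpow_add hK]
  field_simp

lemma zeta_pack {p : ℝ} (hp : 1 ≤ p) {K : ℝ} (hK : 0 < K)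
    {μ : ℝ → ℝ} (hμpos : ∀ s : ℝ, 0 ≤ s → 0 < μ s) (hκ : Wt (kap p K μ)) :
    Measurable (zetaPFn p μ) ∧ BddFun (zetaPFn p μ) ∧
    Tendsto (fun t => zetaPFn p μ t -
      ((K ^ p * p) • fun t => Lam (kap p K μ) (fun x => x) (t ^ p)) t) atTop (nhds 0) := by
  have hp0 : 0 < p := by linarith
  have hKp : 0 < K ^ p := Real.rpow_pos_of_pos hK _
  have hLb := Lam_bound hκ Adm_id
  have hLm := Lam_meas hκ Adm_id
  refine ⟨?_, ⟨K ^ p * p * max 1 K, fun t => ?_⟩, ?_⟩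
  · have : zetaPFn p μ = fun t => if Real.exp 1 < t then
        K ^ p * p * K ^ (1 / Real.log t) * Lam (kap p K μ) (fun x => x) (t ^ p) else 0 := by
      ext t
      split_ifs with h
      · exact zeta_eq hp hK hμpos h
      · simp [zetaPFn, h]
    rw [this]
    have h1 : Measurable fun t : ℝ => Lam (kap p K μ) (fun x => x) (t ^ p) :=
      hLm.comp (by fun_prop)
    exact Measurable.ite measurableSet_Ioi (by fun_prop) measurable_const
  · by_cases ht : Real.exp 1 < t
    · rw [zeta_eq hp hK hμpos ht]
      have hu : 1 ≤ Real.log t := by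
        rw [Real.le_log_iff_exp_le (lt_trans (Real.exp_pos 1) ht)]
        exact ht.le
      have h1 : K ^ (1 / Real.log t) ≤ max 1 K := by
        rcases le_total K 1 with h | h
        · exact (Real.rpow_le_one hK.le h (by positivity)).trans (le_max_left _ _)
        · refine le_trans ?_ (le_max_right _ _)
          calc K ^ (1 / Real.log t) ≤ K ^ (1:ℝ) :=
                Real.rpow_le_rpow_of_exponent_le h (by rw [div_le_one (by linarith)]; exact hu)
            _ = K := Real.rpow_one K
      have h2 : 0 < K ^ (1 / Real.log t) := Real.rpow_pos_of_pos hK _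
      rw [abs_mul, abs_of_pos (by positivity : 0 < K ^ p * p * K ^ (1 / Real.log t))]
      calc K ^ p * p * K ^ (1 / Real.log t) * |Lam (kap p K μ) (fun x => x) (t ^ p)|
          ≤ K ^ p * p * K ^ (1 / Real.log t) * 1 := by gcongr; exact hLb _
        _ ≤ K ^ p * p * max 1 K := by rw [mul_one]; gcongr
    · simp only [zetaPFn, if_neg ht, abs_zero]
      have : (0:ℝ) < max 1 K := lt_of_lt_of_le one_pos (le_max_left _ _)
      positivity
  · have h1 : Tendsto (fun t : ℝ => 1 / Real.log t) atTop (nhds 0) :=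
      Real.tendsto_log_atTop.const_div_atTop _
    have h2 : Tendsto (fun t : ℝ => K ^ p * p * |K ^ (1 / Real.log t) - 1|) atTop (nhds 0) := by
      have h3 : Continuous fun x : ℝ => K ^ p * p * |K ^ x - 1| := by
        have : Continuous fun x : ℝ => K ^ x := Real.continuous_const_rpow hK.ne'
        fun_prop
      simpa [Function.comp_def] using (h3.tendsto 0).comp h1
    refine squeeze_zero_norm' ?_ h2
    filter_upwards [eventually_gt_atTop (Real.exp 1)] with t ht
    rw [zeta_eq hp hK hμpos ht]
    simp only [Pi.smul_apply, smul_eq_mul]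
    rw [show ∀ a b c : ℝ, a * b * c - a * c = a * (b - 1) * c by intros; ring, Real.norm_eq_abs,
      abs_mul, abs_mul, abs_of_pos (by positivity : 0 < K ^ p * p)]
    calc _ ≤ K ^ p * p * |K ^ (1 / Real.log t) - 1| * 1 := by gcongr; exact hLb _
      _ = _ := mul_one _

/-- **The heat semigroup formula (Proposition 11.2).** Let `p ≥ 1`, let
`μ : [0,∞) → (0,∞)` be nonincreasing with `μ(s) ≤ K(1+s)^{−1/p}` (the singular value
function of `T ∈ L^{(p,∞)}`, `T > 0`), and let `ω` be a positive linear functional on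
`L∞((0,∞))` lying between the essential liminf and limsup at `+∞`, invariant under all
dilations `D_c`, all power maps `P^a` and the logarithmic Cesàro operator `M`.  Then
`G(λ) = (1/λ)∫₀^∞ e^{−λ^{−2/p} μ(s)^{−2}} ds` and `Z(t) = (1/log t)∫₀^∞ μ(s)^{p+1/log t} ds`
are bounded and `ω(G) = (1/2)·Γ(p/2)·ω(Z)`. -/
theorem heat_semigroup_formula (p : ℝ) (hp : 1 ≤ p) (K : ℝ) (hK : 0 < K)
    (μ : ℝ → ℝ) (hμpos : ∀ s : ℝ, 0 ≤ s → 0 < μ s)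
    (hmono : AntitoneOn μ (Set.Ici 0))
    (hμbd : ∀ s : ℝ, 0 ≤ s → μ s ≤ K * (1 + s) ^ (-(1 / p)))
    (ω : (ℝ → ℝ) →ₗ[ℝ] ℝ)
    -- ω is positive
    (hpos : ∀ f : ℝ → ℝ, Measurable f → BddFun f →
      (∀ᵐ x ∂((volume : Measure ℝ).restrict (Set.Ioi 0)), 0 ≤ f x) → 0 ≤ ω f)
    -- ω lies between the essential liminf and limsup at +∞
    (hsandwich : ∀ f : ℝ → ℝ, Measurable f → BddFun f →
      liminf f (atTop ⊓ ae ((volume : Measure ℝ).restrict (Set.Ioi 0))) ≤ ω f ∧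
        ω f ≤ limsup f (atTop ⊓ ae ((volume : Measure ℝ).restrict (Set.Ioi 0))))
    -- ω is dilation invariant: ω ∘ D_c = ω for all c > 0
    (hdil : ∀ f : ℝ → ℝ, Measurable f → BddFun f →
      ∀ c : ℝ, 0 < c → ω (fun t => f (t / c)) = ω f)
    -- ω is power invariant: ω ∘ P^a = ω for all a > 0
    (hpow : ∀ f : ℝ → ℝ, Measurable f → BddFun f →
      ∀ a : ℝ, 0 < a → ω (fun t => f (t ^ a)) = ω f)
    -- ω is M-invariant
    (hM : ∀ f : ℝ → ℝ, Measurable f → BddFun f → ω (Mop f) = ω f) :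
    BddFun (heatFn p μ) ∧ BddFun (zetaPFn p μ) ∧
      ω (heatFn p μ) = (1 / 2) * Real.Gamma (p / 2) * ω (zetaPFn p μ) := by
  have hp0 : 0 < p := by linarith
  have hq : 0 < 2 / p := by positivity
  have hKp : 0 < K ^ p := Real.rpow_pos_of_pos hK _
  have hω := goodFn_of ω hpos hsandwich hpow
  have hκ := Wt_kap hp hK hμpos hmono hμbd
  obtain ⟨C, hC1, hC⟩ := exp_bound hq
  have hGb : BddFun (Gk (kap p K μ) (2 / p)) := ⟨C, Gk_bound hκ hC1 hC⟩
  obtain ⟨zm, zb, zt⟩ := zeta_pack hp hK hμpos hκ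
  have hLm := Lam_meas hκ Adm_id
  have hLb := Lam_bound hκ Adm_id
  have hLm' : Measurable fun t : ℝ => Lam (kap p K μ) (fun x => x) (t ^ p) :=
    hLm.comp (by fun_prop)
  refine ⟨?_, zb, ?_⟩
  · rw [heatFn_eq hp hK hμpos]
    exact BddFun.smul _ ⟨C, fun t => Gk_bound hκ hC1 hC _⟩
  · rw [hω.eq _ _ zm (hLm'.const_smul _) zb (BddFun.smul _ ⟨1, fun t => hLb _⟩) zt, map_smul,
      hω.pow _ hLm ⟨1, hLb⟩ p hp0, heatFn_eq hp hK hμpos, map_smul,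
      hdil _ (Gk_meas hκ _) hGb _ (inv_pos.2 hKp), omega_Gk hκ hω hM hq, one_div_div,
      Real.Gamma_add_one (by positivity)]
    simp only [smul_eq_mul]
    ring
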